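/- Let k be a field, C a small category, and M : C → Vec_k a pointwise finite-dimensional persistence module. Then M decomposes as a direct sum M ≅ ⊕_{i ∈ Λ} M_i of indecomposable persistence modules M_i, each of which has a local endomorphism ring (i.e., for every endomorphism θ of M_i, either θ or 1 − θ is an isomorphism). -/

import Mathlib

namespace PModCat

open CategoryTheory

variable (k : Type) [Field k]

/-- A persistence module over a small category `C`: a functor from `C` to
`k`-vector spaces, given explicitly. -/
structure PersistenceModule (C : Type) [Category C] where
  V : C → Type
  [addCommGroup : ∀ x, AddCommGroup (V x)]
  [module : ∀ x, Module k (V x)]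
  map : ∀ {x y : C}, (x ⟶ y) → (V x →ₗ[k] V y)
  map_id : ∀ x : C, map (𝟙 x) = LinearMap.id
  map_comp : ∀ {x y z : C} (f : x ⟶ y) (g : y ⟶ z),
      map (f ≫ g) = (map g).comp (map f)

attribute [instance] PersistenceModule.addCommGroup PersistenceModule.module

variable {k}

/-- A morphism of persistence modules (a natural transformation). -/
structure Hom {C : Type} [Category C] (M N : PersistenceModule k C) where
  app : ∀ x, M.V x →ₗ[k] N.V x
  natural : ∀ {x y : C} (f : x ⟶ y), (N.map f).comp (app x) = (app y).comp (M.map f)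

/-- A morphism of persistence modules is an isomorphism iff it is pointwise bijective. -/
def IsIsoHom {C : Type} [Category C] {M N : PersistenceModule k C} (f : Hom M N) : Prop :=
  ∀ x, Function.Bijective (f.app x)

/-- Two persistence modules are isomorphic if there is a pointwise bijective
morphism between them. -/
def Isomorphic {C : Type} [Category C] (M N : PersistenceModule k C) : Prop :=
  ∃ f : Hom M N, IsIsoHom f

/-- The endomorphism `1 - θ` of `M`, for an endomorphism `θ` of `M`. -/
def oneSub {C : Type} [Category C] {M : PersistenceModule k C} (θ : Hom M M) : Hom M M where
  app x := LinearMap.id - θ.app x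
  natural {x y} f := by
    rw [LinearMap.comp_sub, LinearMap.sub_comp, θ.natural f, LinearMap.comp_id,
      LinearMap.id_comp]

/-- The direct sum of a family of persistence modules, taken pointwise
(`Π₀` is the finitely supported product, i.e. the direct sum). -/
noncomputable def directSum {C : Type} [Category C] {ι : Type}
    (N : ι → PersistenceModule k C) : PersistenceModule k C where
  V x := Π₀ i, (N i).V x
  map {x y} f := DFinsupp.mapRange.linearMap (fun i => (N i).map f)
  map_id x := by
    have h : (fun i => (N i).map (𝟙 x)) =
        fun i => (LinearMap.id : (N i).V x →ₗ[k] (N i).V x) :=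
      funext fun i => (N i).map_id x
    rw [h]
    exact DFinsupp.mapRange.linearMap_id
  map_comp {x y z} f g := by
    have h : (fun i => (N i).map (f ≫ g)) =
        fun i => ((N i).map g).comp ((N i).map f) :=
      funext fun i => (N i).map_comp f g
    rw [h]
    exact DFinsupp.mapRange.linearMap_comp _ _

/-- The binary direct sum of two persistence modules, taken pointwise. -/
def sum2 {C : Type} [Category C] (M N : PersistenceModule k C) : PersistenceModule k C where
  V x := M.V x × N.V x
  map f := (M.map f).prodMap (N.map f)
  map_id x := by
    rw [M.map_id, N.map_id]
    exact LinearMap.prodMap_id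
  map_comp f g := by
    rw [M.map_comp f g, N.map_comp f g]
    exact (LinearMap.prodMap_comp _ _ _ _).symm

/-- The zero persistence module predicate. -/
def IsZero {C : Type} [Category C] (M : PersistenceModule k C) : Prop :=
  ∀ x, ∀ v : M.V x, v = 0

/-- A persistence module is indecomposable if it is nonzero and whenever it is
isomorphic to a direct sum of two modules, one of the summands is zero. -/
def Indecomposable {C : Type} [Category C] (M : PersistenceModule k C) : Prop :=
  ¬ IsZero M ∧ ∀ M' M'' : PersistenceModule k C,
    Isomorphic M (sum2 M' M'') → IsZero M' ∨ IsZero M''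

end PModCat

/-!
Choose a maximal set `B` of pairwise commuting idempotent endomorphisms of `M`. Commuting
idempotents of a finite-dimensional space are simultaneously diagonalizable, so `M` is the direct
sum of the joint eigenspaces of `B`. If one of these splits as `p ⊕ q`, the projection of `M` onto
`p` along `q` and the other joint eigenspaces commutes with `B`, hence belongs to `B` by maximality.
It therefore acts on `p ⊕ q` by a scalar, being the identity on `p` and zero on `q`; so `p = 0` or
`q = 0`. Locality of the endomorphism rings is Fitting's lemma.
-/

namespace PModCat

open CategoryTheory Module.End Polynomial

theorem exists_maximal_commuting_idempotents (S : Type*) [Mul S] :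
    ∃ B : Set S, (∀ e ∈ B, IsIdempotentElem e) ∧ B.Pairwise Commute ∧
      ∀ e, IsIdempotentElem e → (∀ b ∈ B, Commute e b) → e ∈ B := by
  obtain ⟨B, hB⟩ := zorn_subset
      {B : Set S | (∀ e ∈ B, IsIdempotentElem e) ∧ B.Pairwise Commute} <| by
    refine fun c hc hchain => ⟨⋃₀ c, ⟨?_, ?_⟩, fun _ => Set.subset_sUnion_of_mem⟩
    · rintro e ⟨s, hs, he⟩
      exact (hc hs).1 e he
    · exact (Set.pairwise_sUnion hchain.directedOn).2 fun s hs => (hc hs).2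
  refine ⟨B, hB.prop.1, hB.prop.2, fun e he hcomm => ?_⟩
  refine hB.le_of_ge ⟨?_, ?_⟩ (Set.subset_insert e B) (Set.mem_insert e B)
  · exact Set.forall_mem_insert.2 ⟨he, hB.prop.1⟩
  · exact Set.pairwise_insert.2
      ⟨hB.prop.2, fun b hb _ => ⟨hcomm b hb, (hcomm b hb).symm⟩⟩

section LinearAlgebra

theorem comp_projection_eq_projection_comp {R V W : Type*} [Ring R] [AddCommGroup V] [Module R V]
    [AddCommGroup W] [Module R W] {p q : Submodule R V} {p' q' : Submodule R W}
    (h : IsCompl p q) (h' : IsCompl p' q') {f : V →ₗ[R] W}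
    (hp : p ≤ p'.comap f) (hq : q ≤ q'.comap f) :
    f ∘ₗ p.projection q h = p'.projection q' h' ∘ₗ f := by
  ext v
  have hpv : p'.projection q' h' (f (p.projection q h v)) = f (p.projection q h v) :=
    Submodule.projection_apply_of_mem_left h' (hp (Submodule.projection_apply_mem h v))
  have hqv : p'.projection q' h' (f (v - p.projection q h v)) = 0 :=
    (Submodule.projection_apply_eq_zero_iff h').2 (hq (Submodule.sub_projection_mem h v))
  rw [map_sub, map_sub, hpv, sub_eq_zero] at hqv
  exact hqv.symm

theorem isCompl_range_comp_inl_range_comp_inr {R U V W : Type*} [Ring R] [AddCommGroup U]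
    [Module R U] [AddCommGroup V] [Module R V] [AddCommGroup W] [Module R W]
    (e : (U × V) ≃ₗ[R] W) :
    IsCompl (e.toLinearMap ∘ₗ .inl R U V).range (e.toLinearMap ∘ₗ .inr R U V).range := by
  simp only [LinearMap.range_comp]
  exact (Submodule.orderIsoMapComap e).isCompl LinearMap.isCompl_range_inl_inr

section Semiring

variable {R V : Type*} [Semiring R] [AddCommMonoid V] [Module R V]

theorem iSup_mem_invtSubmodule {ι : Sort*} {f : Module.End R V} {p : ι → Submodule R V}
    (h : ∀ i, p i ∈ f.invtSubmodule) : ⨆ i, p i ∈ f.invtSubmodule :=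
  iSup_le fun i => (h i).trans (Submodule.comap_mono (le_iSup p i))

end Semiring

section CommRing

variable {R V : Type*} [CommRing R] [AddCommGroup V] [Module R V]

theorem mem_invtSubmodule_of_le_eigenspace {f : Module.End R V} {μ : R} {p : Submodule R V}
    (h : p ≤ f.eigenspace μ) : p ∈ f.invtSubmodule := fun v hv => by
  rw [Submodule.mem_comap, mem_eigenspace_iff.1 (h hv)]
  exact p.smul_mem μ hv

theorem iSup_eigenspace_eq_top_of_isIdempotentElem {e : Module.End R V}
    (he : IsIdempotentElem e) : ⨆ μ, e.eigenspace μ = ⊤ := by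
  refine eq_top_iff.2 fun v _ => ?_
  have hee : e (e v) = e v := LinearMap.congr_fun he v
  have hone : e v ∈ e.eigenspace 1 := mem_eigenspace_iff.2 (by simp [hee])
  have hzero : v - e v ∈ e.eigenspace 0 := mem_eigenspace_iff.2 (by simp [hee])
  rw [← add_sub_cancel (e v) v]
  exact add_mem (Submodule.mem_iSup_of_mem 1 hone) (Submodule.mem_iSup_of_mem 0 hzero)

theorem iSupIndep_iInf_eigenspace_of_commute [IsDomain R] [Module.IsTorsionFree R V]
    {ι : Type*} {f : ι → Module.End R V} (hf : ∀ i j, Commute (f i) (f j)) :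
    iSupIndep fun χ : ι → R => ⨅ i, (f i).eigenspace (χ i) :=
  (independent_iInf_maxGenEigenspace_of_forall_mapsTo f fun i j =>
    mapsTo_maxGenEigenspace_of_comm (hf j i)).mono fun _ =>
      iInf_mono fun _ => (genEigenspace _ _).monotone le_top

end CommRing

section Field

variable {K V : Type*} [Field K] [AddCommGroup V] [Module K V]

theorem isSemisimple_of_isIdempotentElem {e : Module.End K V} (he : IsIdempotentElem e) :
    e.IsSemisimple := by
  have hsep : (X ^ 2 - X : K[X]).Separable :=
    ⟨-4, 2 * X - 1, by simp only [derivative_sub, derivative_X_sq, derivative_X, map_ofNat]; ring⟩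
  refine isSemisimple_of_squarefree_aeval_eq_zero hsep.squarefree ?_
  simp [sq, he.eq]

theorem iSup_iInf_eigenspace_eq_top_of_isIdempotentElem_of_commute [FiniteDimensional K V]
    {ι : Type*} {f : ι → Module.End K V} (hidem : ∀ i, IsIdempotentElem (f i))
    (hcomm : ∀ i j, Commute (f i) (f j)) :
    ⨆ χ : ι → K, ⨅ i, (f i).eigenspace (χ i) = ⊤ := by
  have heq (i : ι) (μ : K) : (f i).maxGenEigenspace μ = (f i).eigenspace μ :=
    (isSemisimple_of_isIdempotentElem
      (hidem i)).isFinitelySemisimple.maxGenEigenspace_eq_eigenspace μ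
  simp only [← heq]
  refine iSup_iInf_maxGenEigenspace_eq_top_of_iSup_maxGenEigenspace_eq_top_of_commute f
    (fun i j _ => hcomm i j) fun i => ?_
  simp only [heq, iSup_eigenspace_eq_top_of_isIdempotentElem (hidem i)]

end Field

end LinearAlgebra

variable {k : Type} [Field k] {C : Type} [Category C] {M N : PersistenceModule k C}

attribute [ext] Hom

namespace Hom

theorem map_app_apply (f : Hom M N) {x y : C} (a : x ⟶ y) (v : M.V x) :
    N.map a (f.app x v) = f.app y (M.map a v) :=
  LinearMap.congr_fun (f.natural a) v

instance : Monoid (Hom M M) where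
  one := ⟨fun _ => 1, fun _ => rfl⟩
  mul f g := ⟨fun x => f.app x * g.app x, fun a => by
    ext v
    simp [map_app_apply]⟩
  npow n f := ⟨fun x => f.app x ^ n, fun a =>
    (commute_pow_left_of_commute (f.natural a).symm n).symm⟩
  mul_assoc _ _ _ := rfl
  one_mul _ := rfl
  mul_one _ := rfl
  npow_zero _ := rfl
  npow_succ _ _ := Hom.ext (funext fun _ => pow_succ _ _)

theorem isIsoHom_of_ker_eq_bot {θ : Hom M M} (hfd : ∀ x, FiniteDimensional k (M.V x))
    (h : ∀ x, LinearMap.ker (θ.app x) = ⊥) : IsIsoHom θ := fun x =>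
  have := hfd x
  have hinj := LinearMap.ker_eq_bot.1 (h x)
  ⟨hinj, LinearMap.injective_iff_surjective.1 hinj⟩

end Hom

theorem Isomorphic.symm (h : Isomorphic M N) : Isomorphic N M := by
  obtain ⟨f, hf⟩ := h
  let e (x : C) : M.V x ≃ₗ[k] N.V x := .ofBijective (f.app x) (hf x)
  refine ⟨⟨fun x => (e x).symm, fun {x y} a => ?_⟩, fun x => (e x).symm.bijective⟩
  ext w
  refine (e y).eq_symm_apply.2 ?_
  calc f.app y (M.map a ((e x).symm w)) = N.map a (e x ((e x).symm w)) :=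
        (f.map_app_apply a _).symm
    _ = N.map a w := by rw [LinearEquiv.apply_symm_apply]

/-- A family of subspaces `p x ≤ M.V x` is stable when the structure maps of `M` preserve it, i.e.
when it is a subobject of `M`. Keeping the family unbundled lets subobjects be compared in the
pointwise lattice `∀ x, Submodule k (M.V x)`. -/
def IsStable (M : PersistenceModule k C) (p : ∀ x, Submodule k (M.V x)) : Prop :=
  ∀ ⦃x y : C⦄ (a : x ⟶ y), p x ≤ (p y).comap (M.map a)

/-- The persistence module carried by a stable family of subspaces. -/
def restrict (M : PersistenceModule k C) (p : ∀ x, Submodule k (M.V x)) (hp : IsStable M p) :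
    PersistenceModule k C where
  V x := p x
  map a := (M.map a).restrict (hp a)
  map_id x := by
    ext v
    simp [M.map_id]
  map_comp a b := by
    ext v
    simp [M.map_comp]

section Stable

variable {p q : ∀ x, Submodule k (M.V x)}

theorem IsStable.sup (hp : IsStable M p) (hq : IsStable M q) : IsStable M (p ⊔ q) := fun _ _ a =>
  sup_le ((hp a).trans (Submodule.comap_mono le_sup_left))
    ((hq a).trans (Submodule.comap_mono le_sup_right))

theorem IsStable.iSup {ι : Sort*} {p : ι → ∀ x, Submodule k (M.V x)}
    (hp : ∀ i, IsStable M (p i)) : IsStable M (⨆ i, p i) := fun x y a => by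
  simp only [iSup_apply]
  exact iSup_le fun i => (hp i a).trans (Submodule.comap_mono (le_iSup (p · y) i))

theorem IsStable.iInf {ι : Sort*} {p : ι → ∀ x, Submodule k (M.V x)}
    (hp : ∀ i, IsStable M (p i)) : IsStable M (⨅ i, p i) := fun x y a => by
  simp only [iInf_apply, Submodule.comap_iInf]
  exact le_iInf fun i => (iInf_le (p · x) i).trans (hp i a)

theorem Hom.isStable_ker (f : Hom M N) : IsStable M fun x => LinearMap.ker (f.app x) :=
  fun x y a v hv => by
    rw [LinearMap.mem_ker] at hv
    rw [Submodule.mem_comap, LinearMap.mem_ker, ← f.map_app_apply, hv, map_zero]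

theorem Hom.isStable_range (f : Hom M N) : IsStable N fun x => LinearMap.range (f.app x) := by
  rintro x y a _ ⟨v, rfl⟩
  exact ⟨M.map a v, (f.map_app_apply a v).symm⟩

theorem Hom.isStable_eigenspace (f : Hom M M) (μ : k) :
    IsStable M fun x => eigenspace (f.app x) μ := fun x y a v hv => by
  rw [mem_eigenspace_iff] at hv
  rw [Submodule.mem_comap, mem_eigenspace_iff, ← f.map_app_apply, hv, map_smul]

theorem IsStable.map_subtype (hp : IsStable M p) {s : ∀ x, Submodule k (p x)}
    (hs : IsStable (restrict M p hp) s) : IsStable M fun x => (s x).map (p x).subtype := by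
  rintro x y a _ ⟨v, hv, rfl⟩
  exact ⟨(restrict M p hp).map a v, hs a hv, rfl⟩

theorem isomorphic_sum2_of_isCompl (hp : IsStable M p) (hq : IsStable M q)
    (h : ∀ x, IsCompl (p x) (q x)) :
    Isomorphic M (sum2 (restrict M p hp) (restrict M q hq)) :=
  Isomorphic.symm
    ⟨⟨fun x => (Submodule.prodEquivOfIsCompl (p x) (q x) (h x)).toLinearMap, fun a =>
      LinearMap.ext fun v => map_add (M.map a) (v.1 : p _).1 (v.2 : q _).1⟩,
    fun x => (Submodule.prodEquivOfIsCompl (p x) (q x) (h x)).bijective⟩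

theorem eq_bot_of_isZero_restrict (hp : IsStable M p) (h : IsZero (restrict M p hp)) : p = ⊥ :=
  funext fun x => (Submodule.eq_bot_iff _).2 fun v hv => congrArg Subtype.val (h x ⟨v, hv⟩)

theorem isZero_of_range_eq_bot {f : Hom N M} (hf : ∀ x, Function.Injective (f.app x))
    (h : (fun x => LinearMap.range (f.app x)) = ⊥) : IsZero N := fun x v =>
  hf x ((LinearMap.congr_fun (LinearMap.range_eq_bot.1 (congrFun h x)) v).trans (map_zero _).symm)

theorem exists_isCompl_of_isomorphic_sum2 {M' M'' : PersistenceModule k C}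
    (h : Isomorphic M (sum2 M' M'')) :
    ∃ p q : ∀ x, Submodule k (M.V x), IsStable M p ∧ IsStable M q ∧ (∀ x, IsCompl (p x) (q x)) ∧
      (p = ⊥ → IsZero M') ∧ (q = ⊥ → IsZero M'') := by
  obtain ⟨f, hf⟩ := h.symm
  let i : Hom M' M := ⟨fun x => f.app x ∘ₗ .inl k _ _, fun {x y} a => by
    ext v
    exact (f.map_app_apply a (v, 0)).trans
      (congrArg (f.app y) (Prod.ext rfl (map_zero (M''.map a))))⟩
  let j : Hom M'' M := ⟨fun x => f.app x ∘ₗ .inr k _ _, fun {x y} a => by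
    ext v
    exact (f.map_app_apply a (0, v)).trans
      (congrArg (f.app y) (Prod.ext (map_zero (M'.map a)) rfl))⟩
  refine ⟨_, _, i.isStable_range, j.isStable_range, fun x => ?_,
    isZero_of_range_eq_bot fun x => (hf x).injective.comp LinearMap.inl_injective,
    isZero_of_range_eq_bot fun x => (hf x).injective.comp LinearMap.inr_injective⟩
  exact isCompl_range_comp_inl_range_comp_inr (.ofBijective (f.app x) (hf x))

theorem indecomposable_restrict (hp : IsStable M p) (hp0 : p ≠ ⊥)
    (h : ∀ q r : ∀ x, Submodule k (M.V x), IsStable M q → IsStable M r →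
      (∀ x, Disjoint (q x) (r x)) → q ⊔ r = p → q = ⊥ ∨ r = ⊥) :
    Indecomposable (restrict M p hp) := by
  refine ⟨fun hzero => hp0 (eq_bot_of_isZero_restrict hp hzero), fun M' M'' hsum => ?_⟩
  obtain ⟨q, r, hq, hr, hqr, hM', hM''⟩ := exists_isCompl_of_isomorphic_sum2 hsum
  have eq_bot_of_map {s : ∀ x, Submodule k (p x)}
      (hs : (fun x => (s x).map (p x).subtype) = ⊥) : s = ⊥ :=
    funext fun x => Submodule.map_injective_of_injective (p x).injective_subtype
      ((congrFun hs x).trans (Submodule.map_bot _).symm)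
  have hsup : (fun x => (q x).map (p x).subtype) ⊔ (fun x => (r x).map (p x).subtype) = p :=
    funext fun x => by
      calc (q x).map (p x).subtype ⊔ (r x).map (p x).subtype
          = (q x ⊔ r x).map (p x).subtype := (Submodule.map_sup _ _ _).symm
        _ = (⊤ : Submodule k (p x)).map (p x).subtype := congrArg _ (hqr x).sup_eq_top
        _ = p x := Submodule.map_subtype_top _
  exact (h _ _ (hp.map_subtype hq) (hp.map_subtype hr)
    (fun x => Submodule.disjoint_map (p x).injective_subtype (hqr x).disjoint) hsup).imp
      (fun h => hM' (eq_bot_of_map h)) (fun h => hM'' (eq_bot_of_map h))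

theorem isomorphic_directSum_of_iSupIndep {ι : Type} {p : ι → ∀ x, Submodule k (M.V x)}
    (hp : ∀ i, IsStable M (p i)) (hind : ∀ x, iSupIndep (p · x)) (htop : ⨆ i, p i = ⊤) :
    Isomorphic M (directSum fun i => restrict M (p i) (hp i)) := by
  classical
  refine Isomorphic.symm ⟨⟨fun x => DFinsupp.lsum ℕ fun i => (p i x).subtype, fun {x y} a => ?_⟩,
    fun x => DirectSum.isInternal_submodule_of_iSupIndep_of_iSup_eq_top (hind x) ?_⟩
  · refine DFinsupp.lhom_ext fun i v => ?_
    have hmap : (directSum fun i => restrict M (p i) (hp i)).map a (DFinsupp.single i v) =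
        DFinsupp.single i ((restrict M (p i) (hp i)).map a v) :=
      DFinsupp.mapRange_single (hf := fun i => map_zero ((restrict M (p i) (hp i)).map a))
    calc M.map a (DFinsupp.lsum ℕ (fun i => (p i x).subtype) (DFinsupp.single i v))
        = M.map a (v : p i x).1 := congrArg (M.map a) (DFinsupp.lsum_single ..)
      _ = DFinsupp.lsum ℕ (fun i => (p i y).subtype)
            (DFinsupp.single i ((restrict M (p i) (hp i)).map a v)) :=
          (DFinsupp.lsum_single ℕ (fun i => (p i y).subtype) i
            ((restrict M (p i) (hp i)).map a v)).symm
      _ = _ := congrArg _ hmap.symm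
  · simpa only [iSup_apply, Pi.top_apply] using congrFun htop x

end Stable

theorem eq_bot_or_eq_bot_of_indecomposable (hM : Indecomposable M)
    {p q : ∀ x, Submodule k (M.V x)} (hp : IsStable M p) (hq : IsStable M q)
    (h : ∀ x, IsCompl (p x) (q x)) : p = ⊥ ∨ q = ⊥ :=
  (hM.2 _ _ (isomorphic_sum2_of_isCompl hp hq h)).imp (eq_bot_of_isZero_restrict hp)
    (eq_bot_of_isZero_restrict hq)

theorem isIsoHom_or_isIsoHom_oneSub_of_indecomposable (hfd : ∀ x, FiniteDimensional k (M.V x))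
    (hM : Indecomposable M) (θ : Hom M M) : IsIsoHom θ ∨ IsIsoHom (oneSub θ) := by
  let p : ∀ x, Submodule k (M.V x) := ⨆ n, fun x => LinearMap.ker ((θ ^ n).app x)
  let q : ∀ x, Submodule k (M.V x) := ⨅ n, fun x => LinearMap.range ((θ ^ n).app x)
  have hpq (x : C) : IsCompl (p x) (q x) := by
    simp only [p, q, iSup_apply, iInf_apply]
    exact LinearMap.isCompl_iSup_ker_pow_iInf_range_pow (θ.app x)
  have hker (x : C) : LinearMap.ker (θ.app x) ≤ p x := by
    simp only [p, iSup_apply]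
    exact le_iSup_of_le 1 (by rw [pow_one])
  have hfix (x : C) : LinearMap.ker ((oneSub θ).app x) ≤ q x := fun v hv => by
    have hv : θ.app x v = v := (sub_eq_zero.1 hv).symm
    simp only [q, iInf_apply, Submodule.mem_iInf]
    exact fun n => ⟨v, (pow_apply _ n v).trans (Function.iterate_fixed hv n)⟩
  refine (eq_bot_or_eq_bot_of_indecomposable hM (.iSup fun n => (θ ^ n).isStable_ker)
    (.iInf fun n => (θ ^ n).isStable_range) hpq).imp (fun hp => ?_) fun hq => ?_
  · exact Hom.isIsoHom_of_ker_eq_bot hfd fun x => le_bot_iff.1 ((hker x).trans_eq (congrFun hp x))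
  · exact Hom.isIsoHom_of_ker_eq_bot hfd fun x => le_bot_iff.1 ((hfix x).trans_eq (congrFun hq x))

section JointEigenspaces

variable {ι : Type*}

/-- The subspaces of `M` on which each endomorphism `f i` acts as the scalar `χ i`. -/
def jointEigenspace (f : ι → Hom M M) (χ : ι → k) : ∀ x, Submodule k (M.V x) :=
  ⨅ i, fun x => eigenspace ((f i).app x) (χ i)

theorem isStable_jointEigenspace (f : ι → Hom M M) (χ : ι → k) :
    IsStable M (jointEigenspace f χ) :=
  .iInf fun i => (f i).isStable_eigenspace (χ i)

theorem jointEigenspace_le_eigenspace (f : ι → Hom M M) (χ : ι → k) (i : ι) (x : C) :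
    jointEigenspace f χ x ≤ eigenspace ((f i).app x) (χ i) :=
  iInf_le (fun i x => eigenspace ((f i).app x) (χ i)) i x

theorem iSupIndep_jointEigenspace {f : ι → Hom M M} (hf : ∀ i j, Commute (f i) (f j)) (x : C) :
    iSupIndep (jointEigenspace f · x) := by
  simpa only [jointEigenspace, iInf_apply] using iSupIndep_iInf_eigenspace_of_commute
    fun i j => congrArg (Hom.app · x) (hf i j)

theorem iSup_jointEigenspace_eq_top (hfd : ∀ x, FiniteDimensional k (M.V x)) {f : ι → Hom M M}
    (hidem : ∀ i, IsIdempotentElem (f i)) (hcomm : ∀ i j, Commute (f i) (f j)) :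
    ⨆ χ, jointEigenspace f χ = ⊤ := by
  funext x
  have := hfd x
  simpa only [jointEigenspace, iSup_apply, iInf_apply, Pi.top_apply] using
    iSup_iInf_eigenspace_eq_top_of_isIdempotentElem_of_commute
      (fun i => congrArg (Hom.app · x) (hidem i)) fun i j => congrArg (Hom.app · x) (hcomm i j)

theorem isCompl_jointEigenspace_iSup_ne (hfd : ∀ x, FiniteDimensional k (M.V x))
    {f : ι → Hom M M} (hidem : ∀ i, IsIdempotentElem (f i)) (hcomm : ∀ i j, Commute (f i) (f j))
    (χ : ι → k) (x : C) :
    IsCompl (jointEigenspace f χ x) (⨆ (ψ) (_ : ψ ≠ χ), jointEigenspace f ψ x) := by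
  refine ⟨iSupIndep_jointEigenspace hcomm x χ, codisjoint_iff.2 ?_⟩
  rw [← iSup_split_single (jointEigenspace f · x) χ]
  simpa only [iSup_apply, Pi.top_apply] using
    congrFun (iSup_jointEigenspace_eq_top hfd hidem hcomm) x

end JointEigenspaces

section Projection

variable {p q : ∀ x, Submodule k (M.V x)}

/-- The endomorphism of `M` projecting pointwise onto `p` along `q`. -/
noncomputable def projection (hp : IsStable M p) (hq : IsStable M q)
    (h : ∀ x, IsCompl (p x) (q x)) : Hom M M where
  app x := (p x).projection (q x) (h x)
  natural a := comp_projection_eq_projection_comp (h _) (h _) (hp a) (hq a)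

theorem isIdempotentElem_projection (hp : IsStable M p) (hq : IsStable M q)
    (h : ∀ x, IsCompl (p x) (q x)) : IsIdempotentElem (projection hp hq h) :=
  Hom.ext (funext fun x => Submodule.isIdempotentElem_projection (h x))

theorem commute_projection (hp : IsStable M p) (hq : IsStable M q)
    (h : ∀ x, IsCompl (p x) (q x)) {b : Hom M M}
    (hbp : ∀ x, p x ∈ invtSubmodule (b.app x)) (hbq : ∀ x, q x ∈ invtSubmodule (b.app x)) :
    Commute (projection hp hq h) b :=
  Hom.ext (funext fun x =>
    (comp_projection_eq_projection_comp (h x) (h x) (hbp x) (hbq x)).symm)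

end Projection

theorem eq_bot_or_eq_bot_of_projection_eq_smul {p q r : ∀ x, Submodule k (M.V x)}
    (hp : IsStable M p) (hr : IsStable M r) (h : ∀ x, IsCompl (p x) (r x)) (hqr : q ≤ r) {c : k}
    (hc : p ⊔ q ≤ fun x => eigenspace ((projection hp hr h).app x) c) : p = ⊥ ∨ q = ⊥ := by
  have hone (x : C) (v : M.V x) (hv : v ∈ p x) : c • v = v :=
    (mem_eigenspace_iff.1 (hc x (Submodule.mem_sup_left hv))).symm.trans
      (Submodule.projection_apply_of_mem_left (h x) hv)
  have hzero (x : C) (v : M.V x) (hv : v ∈ q x) : c • v = 0 :=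
    (mem_eigenspace_iff.1 (hc x (Submodule.mem_sup_right hv))).symm.trans
      ((Submodule.projection_apply_eq_zero_iff (h x)).2 (hqr x hv))
  obtain rfl | hc0 := eq_or_ne c 0
  · exact .inl (funext fun x => (Submodule.eq_bot_iff _).2 fun v hv => by
      rw [← hone x v hv, zero_smul])
  · exact .inr (funext fun x => (Submodule.eq_bot_iff _).2 fun v hv =>
      (smul_eq_zero.1 (hzero x v hv)).resolve_left hc0)

theorem indecomposable_restrict_jointEigenspace (hfd : ∀ x, FiniteDimensional k (M.V x))
    {B : Set (Hom M M)} (hidem : ∀ b : B, IsIdempotentElem b.1)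
    (hcomm : ∀ b c : B, Commute b.1 c.1)
    (hmax : ∀ e, IsIdempotentElem e → (∀ b ∈ B, Commute e b) → e ∈ B)
    {χ : B → k} (hχ : jointEigenspace (fun b : B => b.1) χ ≠ ⊥) :
    Indecomposable (restrict M _ (isStable_jointEigenspace (fun b : B => b.1) χ)) := by
  refine indecomposable_restrict _ hχ fun p q hp hq hdisj hsup => ?_
  let A : (B → k) → ∀ x, Submodule k (M.V x) := jointEigenspace fun b : B => b.1
  let r : ∀ x, Submodule k (M.V x) := q ⊔ ⨆ (ψ) (_ : ψ ≠ χ), A ψ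
  have hr : IsStable M r :=
    hq.sup (.iSup fun ψ => .iSup fun _ => isStable_jointEigenspace _ ψ)
  have hpr (x : C) : IsCompl (p x) (r x) := by
    simp only [r, Pi.sup_apply, iSup_apply]
    refine (hdisj x).isCompl_sup_right_of_isCompl_sup_left ?_
    rw [← Pi.sup_apply, hsup]
    exact isCompl_jointEigenspace_iSup_ne hfd hidem hcomm χ x
  have hinvt (b : B) (x : C) {s : Submodule k (M.V x)} {ψ : B → k} (hs : s ≤ A ψ x) :
      s ∈ invtSubmodule (b.1.app x) :=
    mem_invtSubmodule_of_le_eigenspace (hs.trans (jointEigenspace_le_eigenspace _ ψ b x))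
  have hpA : p ≤ A χ := le_sup_left.trans_eq hsup
  have hqA : q ≤ A χ := le_sup_right.trans_eq hsup
  have hrinvt (b : B) (x : C) : r x ∈ invtSubmodule (b.1.app x) := by
    simp only [r, Pi.sup_apply, iSup_apply]
    exact Sublattice.sup_mem (hinvt b x (hqA x)) (iSup_mem_invtSubmodule fun ψ =>
      iSup_mem_invtSubmodule fun _ => hinvt b x le_rfl)
  have hmem : projection hp hr hpr ∈ B :=
    hmax _ (isIdempotentElem_projection hp hr hpr) fun b hb =>
      commute_projection hp hr hpr (fun x => hinvt ⟨b, hb⟩ x (hpA x)) (hrinvt ⟨b, hb⟩)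
  exact eq_bot_or_eq_bot_of_projection_eq_smul hp hr hpr le_sup_left
    (hsup.trans_le fun x => jointEigenspace_le_eigenspace _ χ ⟨_, hmem⟩ x)

end PModCat

theorem stmt0 {k : Type} [Field k] {C : Type} [CategoryTheory.SmallCategory C]
    (M : PModCat.PersistenceModule k C)
    (hfd : ∀ x, FiniteDimensional k (M.V x)) :
    ∃ (ι : Type) (N : ι → PModCat.PersistenceModule k C),
      (∀ i, PModCat.Indecomposable (N i)) ∧
      (∀ i (θ : PModCat.Hom (N i) (N i)),
        PModCat.IsIsoHom θ ∨ PModCat.IsIsoHom (PModCat.oneSub θ)) ∧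
      PModCat.Isomorphic M (PModCat.directSum N) := by
  obtain ⟨B, hB, hBB, hmax⟩ := PModCat.exists_maximal_commuting_idempotents (PModCat.Hom M M)
  have hidem (b : B) : IsIdempotentElem b.1 := hB b b.2
  have hcomm (b c : B) : Commute b.1 c.1 := hBB.of_refl b.2 c.2
  let A := PModCat.jointEigenspace fun b : B => b.1
  have hindec (χ : {χ // A χ ≠ ⊥}) : PModCat.Indecomposable (PModCat.restrict M (A χ) _) :=
    PModCat.indecomposable_restrict_jointEigenspace hfd hidem hcomm hmax χ.2
  refine ⟨{χ // A χ ≠ ⊥}, _, hindec, fun χ => ?_, ?_⟩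
  · exact PModCat.isIsoHom_or_isIsoHom_oneSub_of_indecomposable (fun x =>
      have := hfd x
      inferInstanceAs (FiniteDimensional k (A χ x))) (hindec χ)
  · refine PModCat.isomorphic_directSum_of_iSupIndep _ (fun x => ?_) ?_
    · exact (PModCat.iSupIndep_jointEigenspace hcomm x).comp Subtype.val_injective
    · rw [iSup_ne_bot_subtype]
      exact PModCat.iSup_jointEigenspace_eq_top hfd hidem hcomm
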